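/- The expected number of draws ⟨T⟩_2 to collect at least two copies of each of d coupon kinds equals d² ∫_0^∞ (t²/(e^t - 1 - t)) · (1 - (1+t)e^{-t})^d dt. -/

import Mathlib

open MeasureTheory

/-- The probability that a collector of `d` coupon kinds, who stops on first having at
least two copies of every kind, stops at exactly trial `n`. -/
noncomputable def stopProb (d n : ℕ) : ℝ :=
  ((Nat.card {f : Fin n → Fin d //
      (∀ c : Fin d, 2 ≤ (Finset.univ.filter fun i : Fin n => f i = c).card) ∧
      ¬ (∀ c : Fin d,
          2 ≤ (Finset.univ.filter fun i : Fin n => (i : ℕ) < n - 1 ∧ f i = c).card)} : ℕ) : ℝ)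
    / (d : ℝ) ^ n

open scoped Nat ENNReal

theorem card_fiber_counts_eq_multinomial {ι : Type*} [Fintype ι] [DecidableEq ι] (m : ℕ)
    (k : ι → ℕ) (hk : ∑ c, k c = m) :
    (Finset.univ.filter fun f : Fin m → ι =>
      ∀ c, (Finset.univ.filter fun i => f i = c).card = k c).card
      = Nat.multinomial Finset.univ k := by
  classical
  have mono : ∀ j : ι → ℕ, (∏ c, (MvPolynomial.X c : MvPolynomial ι ℕ) ^ j c)
      = MvPolynomial.monomial (Finsupp.equivFunOnFinite.symm j) 1 := by
    intro j
    rw [MvPolynomial.monomial_eq, Finsupp.prod_fintype _ _ (by simp)]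
    simp
  have h1 := Finset.sum_pow_eq_sum_piAntidiag Finset.univ
    (fun c : ι => (MvPolynomial.X c : MvPolynomial ι ℕ)) m
  have h2 := Finset.sum_pow' Finset.univ (fun c : ι => (MvPolynomial.X c : MvPolynomial ι ℕ)) m
  have h3 := congrArg (MvPolynomial.coeff (Finsupp.equivFunOnFinite.symm k)) (h2.symm.trans h1)
  have fib : ∀ f : Fin m → ι, (∏ i, (MvPolynomial.X (f i) : MvPolynomial ι ℕ))
      = ∏ c, MvPolynomial.X c ^ (Finset.univ.filter fun i => f i = c).card := by
    intro f
    rw [← Finset.prod_fiberwise' Finset.univ f]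
    simp
  have cast : ∀ n : ℕ, ((n : MvPolynomial ι ℕ)) = MvPolynomial.C n := fun n => by simp
  simp only [fib, mono, MvPolynomial.coeff_sum, cast, MvPolynomial.coeff_C_mul,
    MvPolynomial.coeff_monomial, EmbeddingLike.apply_eq_iff_eq] at h3
  rw [Finset.card_filter]
  simp only [Fintype.piFinset_univ, funext_iff] at h3
  rw [h3, Finset.sum_eq_single k]
  · simp
  · intro b _ hb
    simp [← funext_iff, hb]
  · intro h
    simp [hk] at h

/-- The number of length-`m` words whose letter multiplicities satisfy `P`. -/
noncomputable def wordCount (ι : Type*) [Fintype ι] [DecidableEq ι] (P : ι → ℕ → Prop)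
    (m : ℕ) : ℕ :=
  Nat.card {f : Fin m → ι // ∀ c, P c (Finset.univ.filter fun i => f i = c).card}

open Classical in
theorem wordCount_eq_sum_multinomial {ι : Type*} [Fintype ι] [DecidableEq ι]
    (P : ι → ℕ → Prop) (m : ℕ) :
    wordCount ι P m = ∑ k ∈ Finset.univ.piAntidiag m,
      if ∀ c, P c (k c) then Nat.multinomial Finset.univ k else 0 := by
  rw [wordCount, Nat.card_eq_fintype_card, Fintype.card_subtype,
    Finset.card_eq_sum_card_fiberwise
      (f := fun f : Fin m → ι => fun c => (Finset.univ.filter fun i => f i = c).card)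
      (t := Finset.univ.piAntidiag m)]
  · refine Finset.sum_congr rfl fun k hk => ?_
    rw [← card_fiber_counts_eq_multinomial m k (by simpa using hk)]
    split_ifs with h
    · congr 1
      ext f
      simp only [Finset.mem_filter, Finset.mem_univ, true_and, funext_iff]
      exact ⟨fun h => h.2, fun h' => ⟨fun c => h' c ▸ h c, h'⟩⟩
    · rw [Finset.card_eq_zero, Finset.filter_eq_empty_iff]
      rintro f hf rfl
      simp at hf
      exact h hf
  · intro f _
    simp only [Finset.mem_coe, Finset.mem_piAntidiag]
    refine ⟨?_, by simp⟩
    rw [← Finset.card_eq_sum_card_fiberwise (by simp)]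
    simp

theorem ENNReal.tsum_pi_fin_prod {n : ℕ} (w : Fin n → ℕ → ℝ≥0∞) :
    ∑' k : Fin n → ℕ, ∏ c, w c (k c) = ∏ c, ∑' j, w c j := by
  induction n with
  | zero => simp
  | succ n ih =>
    rw [← (Fin.consEquiv fun _ => ℕ).tsum_eq, ENNReal.tsum_prod']
    simp only [Fin.prod_univ_succ, Fin.consEquiv_apply, Fin.cons_zero, Fin.cons_succ,
      ENNReal.tsum_mul_left, ih, ENNReal.tsum_mul_right]

open Classical in
theorem tsum_wordCount {d : ℕ} (P : Fin d → ℕ → Prop) (x : ℝ≥0∞) :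
    ∑' m, (wordCount (Fin d) P m : ℝ≥0∞) / m ! * x ^ m
      = ∏ c, ∑' k, if P c k then x ^ k / k ! else 0 := by
  rw [← ENNReal.tsum_pi_fin_prod, ← (Equiv.sigmaFiberEquiv fun k : Fin d → ℕ => ∑ c, k c).tsum_eq,
    ENNReal.tsum_sigma']
  refine tsum_congr fun m => ?_
  have : ∀ k : Fin d → ℕ, k ∈ Finset.univ.piAntidiag m ↔ ∑ c, k c = m := by simp
  rw [← (Equiv.subtypeEquivRight this).tsum_eq]
  refine Eq.trans ?_ (Finset.tsum_subtype (Finset.univ.piAntidiag m)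
    (fun k : Fin d → ℕ => ∏ c, if P c (k c) then x ^ k c / ((k c)! : ℝ≥0∞) else 0)).symm
  rw [wordCount_eq_sum_multinomial]
  push_cast
  rw [div_eq_mul_inv, Finset.sum_mul, Finset.sum_mul]
  refine Finset.sum_congr rfl fun k hk => ?_
  rw [this] at hk
  split_ifs with h
  · simp only [h, if_true, div_eq_mul_inv]
    rw [Finset.prod_mul_distrib, Finset.prod_pow_eq_pow_sum, hk, mul_comm]
    congr 1
    have hs := Nat.multinomial_spec Finset.univ k
    rw [hk] at hs
    rw [← hs, ← ENNReal.prod_inv_distrib (by simp [Set.Pairwise])]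
    push_cast
    have h0 : (Nat.multinomial Finset.univ k : ℝ≥0∞) ≠ 0 := by
      exact_mod_cast (Nat.multinomial_pos _ _).ne'
    rw [ENNReal.mul_inv (.inr (by simp)) (.inr h0), mul_comm (_)⁻¹, ← mul_assoc,
      ENNReal.mul_inv_cancel h0 (by simp), one_mul]
  · push Not at h
    obtain ⟨c, hc⟩ := h
    rw [Finset.prod_eq_zero (Finset.mem_univ c) (by simp [hc])]
    simp

/-- The multiplicities of a word that a single further `c` turns into one where every letter
occurs at least twice. -/
def AlmostDouble {ι : Type*} (c c' : ι) (k : ℕ) : Prop := (c' = c ∧ k = 1) ∨ (c' ≠ c ∧ 2 ≤ k)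

theorem forall_almostDouble_iff {ι : Type*} [DecidableEq ι] (c : ι) (k : ι → ℕ) :
    (∀ c', AlmostDouble c c' (k c')) ↔
      (∀ c', 2 ≤ k c' + if c = c' then 1 else 0) ∧ ¬ ∀ c', 2 ≤ k c' := by
  unfold AlmostDouble
  constructor
  · intro h
    refine ⟨fun c' => ?_, fun h' => ?_⟩
    · have := h c'
      split_ifs <;> grind
    · have := h c
      have := h' c
      grind
  · rintro ⟨h, h'⟩ c'
    push Not at h'
    obtain ⟨a, ha⟩ := h'
    have := h a
    have := h c'
    grind

theorem card_filter_snoc_eq {d m : ℕ} (c c' : Fin d) (g : Fin m → Fin d) :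
    (Finset.univ.filter fun i => (Fin.snoc g c : Fin (m + 1) → Fin d) i = c').card
      = (Finset.univ.filter fun i => g i = c').card + if c = c' then 1 else 0 := by
  simp only [Finset.card_filter, Fin.sum_univ_castSucc, Fin.snoc_castSucc, Fin.snoc_last]

theorem card_filter_lt_snoc_eq {d m : ℕ} (c c' : Fin d) (g : Fin m → Fin d) :
    (Finset.univ.filter fun i : Fin (m + 1) =>
      (i : ℕ) < m + 1 - 1 ∧ (Fin.snoc g c : Fin (m + 1) → Fin d) i = c').card
      = (Finset.univ.filter fun i => g i = c').card := by
  simp only [Finset.card_filter, Fin.sum_univ_castSucc, Fin.snoc_castSucc, Fin.val_castSucc,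
    Fin.is_lt, Fin.val_last, Nat.add_sub_cancel, lt_irrefl, true_and, false_and, if_false, add_zero]

theorem stopProb_succ (d m : ℕ) :
    stopProb d (m + 1) = (∑ c, (wordCount (Fin d) (AlmostDouble c) m : ℝ)) / (d : ℝ) ^ (m + 1) := by
  rw [stopProb]
  congr 1
  rw [← Nat.cast_sum]
  congr 1
  simp only [wordCount]
  rw [← Nat.card_sigma]
  refine Nat.card_congr (Equiv.trans (Equiv.symm ?_) (Equiv.subtypeProdEquivSigmaSubtype
    fun c (g : Fin m → Fin d) =>
      ∀ c', AlmostDouble c c' (Finset.univ.filter fun i => g i = c').card))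
  refine (Fin.snocEquiv fun _ => Fin d).subtypeEquiv ?_
  rintro ⟨c, g⟩
  simp only [Fin.snocEquiv_apply, card_filter_snoc_eq, card_filter_lt_snoc_eq]
  exact forall_almostDouble_iff c fun c' => (Finset.univ.filter fun i => g i = c').card

open Classical in
theorem tsum_almostDouble_factor {ι : Type*} [DecidableEq ι] (c c' : ι) {t : ℝ} (ht : 0 ≤ t) :
    (∑' k, if AlmostDouble c c' k then ENNReal.ofReal t ^ k / (k ! : ℝ≥0∞) else 0)
      = ENNReal.ofReal (if c' = c then t else Real.exp t - 1 - t) := by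
  split_ifs with h
  · rw [tsum_eq_single 1]
    · simp [AlmostDouble, h]
    · intro k hk
      simp [AlmostDouble, h, hk]
  · have hs : HasSum (fun k : ℕ => t ^ k / (k ! : ℝ)) (Real.exp t) := by
      rw [Real.exp_eq_exp_ℝ]; exact NormedSpace.expSeries_div_hasSum_exp t
    have hs2 := (hasSum_nat_add_iff' 2).2 hs
    rw [← ENNReal.summable.sum_add_tsum_nat_add' (k := 2)]
    have h0 : Real.exp t - 1 - t = ∑' k : ℕ, t ^ (k + 2) / ((k + 2)! : ℝ) := by
      rw [hs2.tsum_eq]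
      simp [Finset.sum_range_succ, sub_sub]
    rw [h0, ENNReal.ofReal_tsum_of_nonneg (fun k => by positivity) hs2.summable]
    simp only [Finset.sum_range_succ, AlmostDouble, h]
    simp
    refine tsum_congr fun k => ?_
    rw [if_neg h, ENNReal.ofReal_div_of_pos (by positivity), ENNReal.ofReal_pow ht, ENNReal.ofReal_natCast]

theorem tsum_wordCount_almostDouble {d : ℕ} (c : Fin d) {t : ℝ} (ht : 0 ≤ t) :
    ∑' m, (wordCount (Fin d) (AlmostDouble c) m : ℝ≥0∞) / m ! * ENNReal.ofReal t ^ m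
      = ENNReal.ofReal (t * (Real.exp t - 1 - t) ^ (d - 1)) := by
  classical
  rw [tsum_wordCount]
  simp only [tsum_almostDouble_factor c _ ht]
  have h2 : 0 ≤ Real.exp t - 1 - t := by linarith [Real.add_one_le_exp t]
  rw [← ENNReal.ofReal_prod_of_nonneg (fun i _ => by split_ifs <;> assumption),
    ← Finset.mul_prod_erase _ _ (Finset.mem_univ c), if_pos rfl,
    Finset.prod_eq_pow_card fun i hi => if_neg (Finset.ne_of_mem_erase hi)]
  simp

theorem lintegral_pow_mul_exp_neg_mul_Ioi (n : ℕ) {r : ℝ} (hr : 0 < r) :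
    ∫⁻ t in Set.Ioi (0 : ℝ), ENNReal.ofReal (t ^ n * Real.exp (-(r * t)))
      = ENNReal.ofReal (n ! / r ^ (n + 1)) := by
  have h := Real.integral_rpow_mul_exp_neg_mul_Ioi (a := n + 1) (r := r) (by positivity) hr
  rw [Real.Gamma_nat_eq_factorial] at h
  simp only [add_sub_cancel_right, Real.rpow_natCast] at h
  have h1 : (1 / r) ^ ((n : ℝ) + 1) * (n ! : ℝ) = n ! / r ^ (n + 1) := by
    rw [← Nat.cast_succ, Real.rpow_natCast, one_div, inv_pow, mul_comm, div_eq_mul_inv]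
  rw [h1] at h
  rw [← h, ofReal_integral_eq_lintegral_ofReal]
  · refine not_imp_comm.1 integral_undef ?_
    rw [h]
    positivity
  · filter_upwards [ae_restrict_mem measurableSet_Ioi] with t ht
    have : 0 < t := ht
    simp only [Pi.zero_apply]
    positivity

theorem integrand_eq (d : ℕ) (hd : 1 ≤ d) {t : ℝ} (ht : 0 < t) :
    t ^ 2 / (Real.exp t - 1 - t) * (1 - (1 + t) * Real.exp (-t)) ^ d
      = t * Real.exp (-(d * t)) * (t * (Real.exp t - 1 - t) ^ (d - 1)) := by
  have h2 : Real.exp t - 1 - t ≠ 0 := by linarith [Real.add_one_lt_exp ht.ne']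
  have h3 : 1 - (1 + t) * Real.exp (-t) = Real.exp (-t) * (Real.exp t - 1 - t) := by
    have : Real.exp (-t) * Real.exp t = 1 := by rw [← Real.exp_add]; simp
    linear_combination -this
  obtain ⟨e, rfl⟩ : ∃ e, d = e + 1 := ⟨d - 1, by omega⟩
  rw [h3, mul_pow, ← Real.exp_nat_mul, Nat.add_sub_cancel, mul_neg, pow_succ (_ - _ - _)]
  field_simp

theorem lintegral_integrand (d : ℕ) (hd : 1 ≤ d) (c : Fin d) :
    ∫⁻ t in Set.Ioi (0 : ℝ), ENNReal.ofReal
        (t ^ 2 / (Real.exp t - 1 - t) * (1 - (1 + t) * Real.exp (-t)) ^ d)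
      = ∑' m : ℕ, ENNReal.ofReal
          (wordCount (Fin d) (AlmostDouble c) m * (m + 1) / (d : ℝ) ^ (m + 2)) := by
  have hd' : (0 : ℝ) < d := by exact_mod_cast hd
  have key : ∀ t ∈ Set.Ioi (0 : ℝ), ENNReal.ofReal
        (t ^ 2 / (Real.exp t - 1 - t) * (1 - (1 + t) * Real.exp (-t)) ^ d)
      = ∑' m : ℕ, (wordCount (Fin d) (AlmostDouble c) m : ℝ≥0∞) / m ! *
          ENNReal.ofReal (t ^ (m + 1) * Real.exp (-(d * t))) := by
    intro t ht
    have ht : 0 < t := ht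
    rw [integrand_eq d hd ht, ENNReal.ofReal_mul (by positivity),
      ← tsum_wordCount_almostDouble c ht.le, ← ENNReal.tsum_mul_left]
    refine tsum_congr fun m => ?_
    rw [← ENNReal.ofReal_pow ht.le, mul_left_comm, ← ENNReal.ofReal_mul (by positivity)]
    congr 2
    ring
  rw [setLIntegral_congr_fun measurableSet_Ioi key, lintegral_tsum (fun m => by fun_prop)]
  refine tsum_congr fun m => ?_
  rw [lintegral_const_mul _ (by fun_prop), lintegral_pow_mul_exp_neg_mul_Ioi _ hd',
    ← ENNReal.ofReal_natCast, ← ENNReal.ofReal_natCast (m !),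
    ← ENNReal.ofReal_div_of_pos (by positivity), ← ENNReal.ofReal_mul (by positivity)]
  congr 1
  rw [Nat.factorial_succ]
  push_cast
  field_simp

/-- The expected number of draws to collect at least two copies of each of `d` kinds:
`⟨T⟩₂ = d² ∫_0^∞ (t²/(e^t - 1 - t)) (1 - (1+t)e^{-t})^d dt`. -/
theorem expected_time_two_copies_integral (d : ℕ) (hd : 1 ≤ d) :
    ∑' n : ℕ, (n : ℝ) * stopProb d n
      = (d : ℝ) ^ 2 * ∫ t in Set.Ioi (0 : ℝ),
          t ^ 2 / (Real.exp t - 1 - t) * (1 - (1 + t) * Real.exp (-t)) ^ d := by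
  have hd' : (0 : ℝ) < d := by exact_mod_cast hd
  have nonneg : ∀ᵐ t ∂(volume.restrict (Set.Ioi (0 : ℝ))),
      0 ≤ t ^ 2 / (Real.exp t - 1 - t) * (1 - (1 + t) * Real.exp (-t)) ^ d := by
    filter_upwards [ae_restrict_mem measurableSet_Ioi] with t ht
    have ht : 0 < t := ht
    have : 0 ≤ Real.exp t - 1 - t := by linarith [Real.add_one_le_exp t]
    rw [integrand_eq d hd ht]
    positivity
  have meas : Measurable fun t : ℝ =>
      t ^ 2 / (Real.exp t - 1 - t) * (1 - (1 + t) * Real.exp (-t)) ^ d := by fun_prop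
  have e1 : ∑' n : ℕ, (n : ℝ) * stopProb d n
      = (∑' n : ℕ, ENNReal.ofReal ((n : ℝ) * stopProb d n)).toReal := by
    rw [ENNReal.tsum_toReal_eq (fun _ => ENNReal.ofReal_ne_top)]
    refine tsum_congr fun n => (ENNReal.toReal_ofReal ?_).symm
    rw [stopProb]
    positivity
  have e2 : ∑' n : ℕ, ENNReal.ofReal ((n : ℝ) * stopProb d n)
      = ∑ c : Fin d, ENNReal.ofReal d * ∑' m : ℕ, ENNReal.ofReal
          (wordCount (Fin d) (AlmostDouble c) m * (m + 1) / (d : ℝ) ^ (m + 2)) := by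
    simp only [← ENNReal.tsum_mul_left, ← ENNReal.ofReal_mul hd'.le]
    rw [tsum_eq_zero_add' ENNReal.summable, ← Summable.tsum_finsetSum (fun _ _ => ENNReal.summable)]
    simp only [Nat.cast_zero, zero_mul, ENNReal.ofReal_zero, zero_add]
    refine tsum_congr fun m => ?_
    rw [← ENNReal.ofReal_sum_of_nonneg (fun _ _ => by positivity), stopProb_succ, Finset.sum_div,
      Finset.mul_sum]
    congr 1
    refine Finset.sum_congr rfl fun c _ => ?_
    push_cast
    field_simp
    ring
  rw [integral_eq_lintegral_of_nonneg_ae nonneg meas.aestronglyMeasurable, e1, e2]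
  simp only [← lintegral_integrand d hd, Finset.sum_const, Finset.card_univ, Fintype.card_fin,
    nsmul_eq_mul, ENNReal.toReal_mul, ENNReal.toReal_natCast, ENNReal.toReal_ofReal hd'.le]
  ring
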